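/- (Left-variable Hales–Jewett theorem.) Let L be a finite alphabet. For every finite colouring of W_L there exist a variable-free word w_0 ∈ W_L and an infinite sequence X = (x_n)_{n<ω} of left-variable words such that the translate w_0⌢[X]_L = {w_0⌢x_{n_0}[λ_0]⌢…⌢x_{n_k}[λ_k] : k < ω, n_0 < … < n_k < ω, λ_0,…,λ_k ∈ L} is monochromatic. -/

import Mathlib

namespace DualRamsey

/-- Variable words over alphabet `L` are words over `Option L`, where `none` plays the
role of the variable `v`. `substW x lam` is `x[λ]`: replace every occurrence of the
variable by `lam`. -/
def substW {L : Type*} (x : List (Option L)) (lam : L) : List L :=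
  x.map (fun o => o.getD lam)

/-- A left-variable word: a variable word whose first letter is the variable. -/
def IsLeftVar {L : Type*} (x : List (Option L)) : Prop := x.head? = some none

/-! In a compact right topological semigroup, an element `p` of a minimal closed left ideal
satisfies `p * q = p` for every idempotent `q` of that ideal. Let `w` be an idempotent of a
minimal closed left ideal of `βW_L`, regarded also as an ultrafilter on words over `L ∪ {v}`. The
left ideal generated by `w` there contains an idempotent `ν` concentrating on left-variable words.
Each substitution `x ↦ x[λ]` fixes `w`, so it maps `ν` to an idempotent `ν[λ]` of the original
left ideal, whence `w * ν[λ] = w` and `ν[λ] * ν[λ'] = ν[λ]`. Choosing `w₀` generic for `w`, and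
then the `x_n` one after the other, each generic for `ν`, keeps all the products in the colour
class belonging to `w`. -/

section CompactSemigroup

section Mul

variable {M : Type*} [Mul M] [TopologicalSpace M]

/-- Nonempty closed left ideals of a topological semigroup. Their minimal elements play the role of
the minimal left ideals in the algebra of `βS`. -/
structure IsClosedLeftIdeal (I : Set M) : Prop where
  isClosed : IsClosed I
  nonempty : I.Nonempty
  mul_mem : ∀ p, ∀ q ∈ I, p * q ∈ I

theorem IsClosedLeftIdeal.sInter [CompactSpace M] {D : Set (Set M)} (hne : D.Nonempty)
    (hchain : IsChain (· ⊆ ·) D) (hD : ∀ I ∈ D, IsClosedLeftIdeal I) :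
    IsClosedLeftIdeal (⋂₀ D) where
  isClosed := isClosed_sInter fun I hI => (hD I hI).isClosed
  nonempty :=
    have : Nonempty D := hne.to_subtype
    IsCompact.nonempty_sInter_of_directed_nonempty_isCompact_isClosed
      (fun I hI J hJ => (hchain.total hI hJ).elim (fun h => ⟨I, hI, subset_rfl, h⟩)
        fun h => ⟨J, hJ, h, subset_rfl⟩)
      (fun I hI => (hD I hI).nonempty) (fun I hI => (hD I hI).isClosed.isCompact)
      (fun I hI => (hD I hI).isClosed)
  mul_mem p q hq I hI := (hD I hI).mul_mem p q (hq I hI)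

theorem exists_minimal_isClosedLeftIdeal [Nonempty M] [CompactSpace M] :
    ∃ I : Set M, Minimal IsClosedLeftIdeal I := by
  refine zorn_superset {I | IsClosedLeftIdeal I} fun D hD hchain => ?_
  obtain rfl | hne := D.eq_empty_or_nonempty
  · exact ⟨Set.univ, ⟨isClosed_univ, Set.univ_nonempty, fun _ _ _ => trivial⟩, by simp⟩
  · exact ⟨⋂₀ D, .sInter hne hchain hD, fun _ => Set.sInter_subset_of_mem⟩

end Mul

variable {M : Type*} [Semigroup M] [TopologicalSpace M] [T2Space M]

theorem isClosedLeftIdeal_range_mul_right [CompactSpace M] (hc : ∀ r : M, Continuous (· * r))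
    (q : M) : IsClosedLeftIdeal (Set.range (· * q)) where
  isClosed := (isCompact_range (hc q)).isClosed
  nonempty := ⟨q * q, q, rfl⟩
  mul_mem := by
    rintro p _ ⟨r, rfl⟩
    exact ⟨p * r, mul_assoc p r q⟩

theorem mul_eq_left_of_minimal [CompactSpace M] (hc : ∀ r : M, Continuous (· * r)) {I : Set M}
    (hI : Minimal IsClosedLeftIdeal I) {p q : M} (hp : p ∈ I) (hq : q ∈ I)
    (hqq : IsIdempotentElem q) : p * q = p := by
  have range_subset : Set.range (· * q) ⊆ I := by
    rintro _ ⟨r, rfl⟩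
    exact hI.prop.mul_mem r q hq
  obtain ⟨r, rfl⟩ := hI.le_of_le (isClosedLeftIdeal_range_mul_right hc q) range_subset hp
  rw [mul_assoc, hqq.eq]

theorem IsClosedLeftIdeal.exists_isIdempotentElem [CompactSpace M]
    (hc : ∀ r : M, Continuous (· * r)) {I : Set M} (hI : IsClosedLeftIdeal I) :
    ∃ q ∈ I, IsIdempotentElem q :=
  exists_idempotent_in_compact_subsemigroup hc I hI.nonempty hI.isClosed.isCompact
    fun p _ q hq => hI.mul_mem p q hq

theorem exists_mem_isIdempotentElem_mul (hc : ∀ r : M, Continuous (· * r)) {R : Set M}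
    (hR : R.Nonempty) (hRc : IsCompact R) (hRmul : ∀ p ∈ R, ∀ q, p * q ∈ R) (q : M) :
    ∃ p ∈ R, IsIdempotentElem (p * q) := by
  obtain ⟨_, ⟨p, hp, rfl⟩, hpq⟩ := exists_idempotent_in_compact_subsemigroup hc ((· * q) '' R)
    (hR.image _) (hRc.image (hc q)) (by
      rintro _ ⟨a, ha, rfl⟩ _ ⟨b, -, rfl⟩
      exact ⟨a * q * b, hRmul _ (hRmul a ha q) b, mul_assoc (a * q) b q⟩)
  exact ⟨p, hp, hpq⟩

end CompactSemigroup

section Ultrafilter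

open Filter

attribute [local instance] Ultrafilter.mul Ultrafilter.semigroup

theorem ultrafilter_map_mul {S T : Type*} [Mul S] [Mul T] (f : S →ₙ* T) (U V : Ultrafilter S) :
    (U * V).map f = U.map f * V.map f := by
  refine Ultrafilter.coe_injective (Filter.ext' fun p => ?_)
  simp only [Ultrafilter.coe_map, eventually_map, Ultrafilter.eventually_mul, map_mul]

theorem ultrafilter_mul_mem {S : Type*} [Mul S] {V : Set S} (hV : ∀ x ∈ V, ∀ y, x * y ∈ V)
    {p : Ultrafilter S} (hp : V ∈ p) (q : Ultrafilter S) : V ∈ p * q :=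
  (Ultrafilter.eventually_mul p q (· ∈ V)).2 <|
    mem_of_superset hp fun x hx => Eventually.of_forall (hV x hx)

theorem exists_ultrafilter_absorbing {S T L : Type*} [Semigroup S] [Semigroup T] [Nonempty T]
    (e : T →ₙ* S) (σ : L → S →ₙ* T) (hσ : ∀ l, Function.LeftInverse (σ l) e)
    {V : Set S} (hV : V.Nonempty) (hVmul : ∀ x ∈ V, ∀ y, x * y ∈ V) :
    ∃ (w : Ultrafilter T) (ν : Ultrafilter S), V ∈ ν ∧ (∀ l, w * ν.map (σ l) = w) ∧
      ∀ l l', ν.map (σ l) * ν.map (σ l') = ν.map (σ l) := by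
  obtain ⟨I, hI⟩ := exists_minimal_isClosedLeftIdeal (M := Ultrafilter T)
  obtain ⟨w, hwI, -⟩ := hI.prop.exists_isIdempotentElem Ultrafilter.continuous_mul_left
  obtain ⟨u, huV, hidem⟩ := exists_mem_isIdempotentElem_mul Ultrafilter.continuous_mul_left
    (R := {p : Ultrafilter S | V ∈ p}) ⟨pure hV.some, hV.some_mem⟩
    (ultrafilter_isClosed_basic V).isCompact (fun _ => ultrafilter_mul_mem hVmul) (w.map e)
  have map_mem (l : L) : (u * w.map e).map (σ l) ∈ I := by
    rw [ultrafilter_map_mul, Ultrafilter.map_map, (hσ l).comp_eq_id, Ultrafilter.map_id]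
    exact hI.prop.mul_mem _ w hwI
  have map_idem (l : L) : IsIdempotentElem ((u * w.map e).map (σ l)) := by
    rw [IsIdempotentElem, ← ultrafilter_map_mul, hidem.eq]
  have absorb {p : Ultrafilter T} (hp : p ∈ I) (l : L) : p * (u * w.map e).map (σ l) = p :=
    mul_eq_left_of_minimal Ultrafilter.continuous_mul_left hI hp (map_mem l) (map_idem l)
  exact ⟨w, u * w.map e, ultrafilter_mul_mem hVmul huV _, absorb hwI, fun l => absorb (map_mem l)⟩

section StarSet

variable {T L : Type*} {u : L → Ultrafilter T} {A : Set T}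

/-- The elements of `A` all of whose translates by `u l`-generic elements stay in `A`: the analogue,
for a family `u` of ultrafilters, of the set written `A⋆` in proofs of Hindman's theorem. -/
def starSet [Mul T] (u : L → Ultrafilter T) (A : Set T) : Set T :=
  {a ∈ A | ∀ l, ∀ᶠ z in u l, a * z ∈ A}

theorem eventually_mem_starSet [Mul T] [Finite L] {w : Ultrafilter T} (hw : ∀ l, w * u l = w)
    (hA : A ∈ w) : ∀ᶠ a in w, a ∈ starSet u A :=
  Eventually.and hA <| eventually_all.2 fun l =>
    (Ultrafilter.eventually_mul w (u l) (· ∈ A)).1 <| by rwa [hw l]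

theorem eventually_mul_mem_starSet [Semigroup T] [Finite L] (hu : ∀ l l', u l * u l' = u l) {a : T}
    (ha : a ∈ starSet u A) (l : L) : ∀ᶠ z in u l, a * z ∈ starSet u A := by
  refine (ha.2 l).and (eventually_all.2 fun l' => ?_)
  have key : ∀ᶠ z in (u l * u l' : Ultrafilter T), a * z ∈ A := by rw [hu l l']; exact ha.2 l
  simpa only [Ultrafilter.eventually_mul, mul_assoc] using key

end StarSet

theorem exists_forall_finset_mul_mem {S T L κ : Type*} [Semigroup S] [Semigroup T] [Nonempty T]
    [Finite L] [Finite κ] (e : T →ₙ* S) (σ : L → S →ₙ* T)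
    (hσ : ∀ l, Function.LeftInverse (σ l) e) {V : Set S} (hV : V.Nonempty)
    (hVmul : ∀ x ∈ V, ∀ y, x * y ∈ V) (c : T → κ) :
    ∃ (i : κ) (B : Set T), B.Nonempty ∧ (∀ a ∈ B, c a = i) ∧
      ∀ F : Finset T, ↑F ⊆ B → ∃ x ∈ V, ∀ a ∈ F, ∀ l, a * σ l x ∈ B := by
  obtain ⟨w, ν, hVν, hwν, hνν⟩ := exists_ultrafilter_absorbing e σ hσ hV hVmul
  obtain ⟨i, hi⟩ : ∃ i, ∀ᶠ a in w, c a = i :=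
    Ultrafilter.eventually_exists_iff.1 (Eventually.of_forall fun a => ⟨c a, rfl⟩)
  refine ⟨i, starSet (fun l => ν.map (σ l)) {a | c a = i}, (eventually_mem_starSet hwν hi).exists,
    fun _ ha => ha.1, fun F hF => Eventually.exists (f := ν) <| Eventually.and hVν ?_⟩
  exact (eventually_all_finset F).2 fun a ha => eventually_all.2 fun l =>
    eventually_mul_mem_starSet hνν (hF ha) l

end Ultrafilter

theorem exists_seq_forall_finset_mul_mem {S T L : Type*} [Mul T] [Finite L] (f : L → S → T)
    {V : Set S} {B : Set T} {w₀ : T} (hw₀ : w₀ ∈ B)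
    (hB : ∀ F : Finset T, ↑F ⊆ B → ∃ x ∈ V, ∀ a ∈ F, ∀ l, a * f l x ∈ B) :
    ∃ (F : ℕ → Set T) (X : ℕ → S), (∀ n, w₀ ∈ F n ∧ F n ⊆ B ∧ X n ∈ V) ∧
      ∀ m n, m < n → ∀ a ∈ F m, ∀ l, a * f l (X m) ∈ F n := by
  classical
  cases nonempty_fintype L
  -- A term of the sequence is a pair: the products available so far, and the next word.
  obtain ⟨g, hg, hstep⟩ := exists_seq_of_forall_finset_exists
    (fun p : Finset T × S =>
      (w₀ ∈ p.1 ∧ ↑p.1 ⊆ B ∧ p.2 ∈ V) ∧ ∀ a ∈ p.1, ∀ l, a * f l p.2 ∈ B)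
    (fun p q => ∀ a ∈ p.1, ∀ l, a * f l p.2 ∈ q.1) (fun s hs => by
      let F := insert w₀
        (s.biUnion fun p => Finset.image₂ (fun a l => a * f l p.2) p.1 Finset.univ)
      have hFB : ↑F ⊆ B := by
        simp only [F, Finset.coe_insert, Finset.coe_biUnion, Finset.coe_image₂,
          Set.insert_subset_iff, Set.iUnion_subset_iff, Set.image2_subset_iff]
        exact ⟨hw₀, fun p hp a ha l _ => (hs p hp).2 a ha l⟩
      obtain ⟨x, hxV, hx⟩ := hB F hFB
      exact ⟨(F, x), ⟨⟨Finset.mem_insert_self _ _, hFB, hxV⟩, hx⟩, fun p hp a ha l =>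
        Finset.mem_insert_of_mem <| Finset.mem_biUnion.2
          ⟨p, hp, Finset.mem_image₂_of_mem ha (Finset.mem_univ l)⟩⟩)
  exact ⟨fun n => ↑(g n).1, fun n => (g n).2, fun n => (hg n).1, hstep⟩

theorem mul_prod_ofFn_mem {S T L : Type*} [Monoid T] {f : L → S → T} {w₀ : T} {F : ℕ → Set T}
    {X : ℕ → S} (hw₀ : ∀ n, w₀ ∈ F n)
    (hstep : ∀ m n, m < n → ∀ a ∈ F m, ∀ l, a * f l (X m) ∈ F n) {k : ℕ} {ns : Fin k → ℕ}
    (hns : StrictMono ns) (lam : Fin k → L) {n : ℕ} (hn : ∀ j, ns j < n) :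
    w₀ * (List.ofFn fun j => f (lam j) (X (ns j))).prod ∈ F n := by
  induction k generalizing n with
  | zero => simpa using hw₀ n
  | succ k ih =>
    have hmem := ih (hns.comp Fin.strictMono_castSucc) (lam ∘ Fin.castSucc)
      fun j => hns (Fin.castSucc_lt_last j)
    rw [List.ofFn_succ_last, List.prod_append, List.prod_singleton, ← mul_assoc]
    exact hstep _ n (hn (Fin.last k)) _ hmem _

/-- The theorem for arbitrary semigroup retractions in place of the substitutions `x ↦ x[λ]`, and an
arbitrary right ideal `V` in place of the left-variable words. -/
theorem leftVariableHalesJewett_general {S T L κ : Type*} [Semigroup S] [Monoid T] [Finite L]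
    [Finite κ] (e : T →ₙ* S) (σ : L → S →ₙ* T) (hσ : ∀ l, Function.LeftInverse (σ l) e)
    {V : Set S} (hV : V.Nonempty) (hVmul : ∀ x ∈ V, ∀ y, x * y ∈ V) (c : T → κ) :
    ∃ (w₀ : T) (X : ℕ → S) (i : κ), (∀ n, X n ∈ V) ∧
      ∀ (k : ℕ) (ns : Fin k → ℕ) (lam : Fin k → L), StrictMono ns →
        c (w₀ * (List.ofFn fun j => σ (lam j) (X (ns j))).prod) = i := by
  obtain ⟨i, B, ⟨w₀, hw₀⟩, hBi, hB⟩ := exists_forall_finset_mul_mem e σ hσ hV hVmul c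
  obtain ⟨F, X, hFX, hstep⟩ := exists_seq_forall_finset_mul_mem (fun l => σ l) hw₀ hB
  refine ⟨w₀, X, i, fun n => (hFX n).2.2, fun k ns lam hns => ?_⟩
  obtain ⟨n, hn⟩ := (Set.finite_range ns).bddAbove
  have hlt (j : Fin k) : ns j < n + 1 := Nat.lt_succ_of_le (hn ⟨j, rfl⟩)
  exact hBi _ <| (hFX (n + 1)).2.1 <| mul_prod_ofFn_mem (fun n => (hFX n).1) hstep hns lam hlt

section Words

variable {L : Type*}

theorem IsLeftVar.append {x : List (Option L)} (hx : IsLeftVar x) (y : List (Option L)) :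
    IsLeftVar (x ++ y) := by
  rw [IsLeftVar, List.head?_append, hx, Option.some_or]

/-- The substitution `x ↦ x[λ]` as a homomorphism from words over `L ∪ {v}` to words over `L`. -/
def substHom (lam : L) : FreeMonoid (Option L) →* FreeMonoid L :=
  FreeMonoid.map fun o => o.getD lam

theorem leftInverse_substHom_map_some (lam : L) :
    Function.LeftInverse (substHom lam) (FreeMonoid.map some) := fun w => by
  rw [substHom, FreeMonoid.map_map]
  exact DFunLike.congr_fun FreeMonoid.map_id w

theorem toList_mul_prod_ofFn_substHom (w : FreeMonoid L) {k : ℕ}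
    (x : Fin k → FreeMonoid (Option L)) (lam : Fin k → L) :
    (w * (List.ofFn fun j => substHom (lam j) (x j)).prod).toList =
      w.toList ++ (List.ofFn fun j => substW (x j).toList (lam j)).flatten := by
  rw [FreeMonoid.toList_mul, FreeMonoid.toList_prod, List.map_ofFn]
  rfl

end Words

/-- **Left-variable Hales–Jewett theorem.** For a finite alphabet `L` and any finite
colouring of the set `W_L` of words over `L`, there are a variable-free word `w₀` and an
infinite sequence `X = (x_n)` of left-variable words such that the translate
`w₀⌢[X]_L = {w₀⌢x_{n₀}[λ₀]⌢…⌢x_{n_k}[λ_k] : k < ω, n₀ < … < n_k, λ_i ∈ L}`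
is monochromatic. -/
theorem leftVariableHalesJewett (L : Type) [Finite L] (m : ℕ) (c : List L → Fin m) :
    ∃ (w₀ : List L) (X : ℕ → List (Option L)) (i : Fin m),
      (∀ n, IsLeftVar (X n)) ∧
      ∀ (k : ℕ) (ns : Fin (k + 1) → ℕ) (lam : Fin (k + 1) → L), StrictMono ns →
        c (w₀ ++ (List.ofFn fun j => substW (X (ns j)) (lam j)).flatten) = i := by
  obtain ⟨w₀, X, i, hX, hc⟩ := leftVariableHalesJewett_general
    (V := {x : FreeMonoid (Option L) | IsLeftVar x.toList}) (FreeMonoid.map some : _ →* _).toMulHom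
    (fun lam => (substHom lam).toMulHom) leftInverse_substHom_map_some ⟨.of none, rfl⟩
    (fun _ hx y => hx.append y.toList) (fun w => c w.toList)
  refine ⟨w₀.toList, fun n => (X n).toList, i, hX, fun k ns lam hns => ?_⟩
  rw [← toList_mul_prod_ofFn_substHom]
  exact hc (k + 1) ns lam hns

end DualRamsey
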